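/- arXiv:2102.07394 — 4 statements merged into one kernel-verified Lean document; each statement's English description precedes it below -/
import Mathlib

section
/- Let (l,m,k) be an admissible triple with r = (l+m−k)/2. Then for every integer N ≥ 2 one has 0 < θ_{q(N)}(k,l,m) ≤ [k+1]_{q(N)}·N^r. (This is the statement that t_N := √(θ_q(k,l,m)/([k+1]_q N^r)) lies in (0,1], i.e. that t_N is the norm ‖(p_l⊗p_m)γ^{l,m}_k ξ‖ of a projection applied to a unit vector.) -/
open scoped BigOperators

/-- `q(N) = 2/(N + √(N²−4))`, so that `0 < q ≤ 1` and `q + q⁻¹ = N` for `N ≥ 2`. -/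
noncomputable def qpar (N : ℕ) : ℝ := 2 / (N + Real.sqrt ((N : ℝ) ^ 2 - 4))

/-- The quantum integer `[n]_q = q^{n−1} + q^{n−3} + ⋯ + q^{−(n−1)}` (and `[0]_q = 0`). -/
noncomputable def qint (N n : ℕ) : ℝ :=
  ∑ j ∈ Finset.range n, qpar N ^ ((n : ℤ) - 1 - 2 * (j : ℤ))

/-- The quantum factorial `[n]_q! = [n]_q·[n−1]_q·⋯·[1]_q`, with `[0]_q! = 1`. -/
noncomputable def qfact (N n : ℕ) : ℝ := ∏ i ∈ Finset.range n, qint N (i + 1)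

/-- The theta-net `θ_q(k,l,m)` of an admissible triple, with `r = (l+m−k)/2`. -/
noncomputable def thetaNet (N k l m r : ℕ) : ℝ :=
  (qfact N r * qfact N (l - r) * qfact N (m - r) * qfact N (k + r + 1)) /
    (qfact N l * qfact N m * qfact N k)

theorem qpar_pos {N : ℕ} (hN : 2 ≤ N) : 0 < qpar N := by
  have h : (2:ℝ) ≤ N := by exact_mod_cast hN
  have := Real.sqrt_nonneg ((N : ℝ) ^ 2 - 4)
  unfold qpar; positivity

theorem qpar_add {N : ℕ} (hN : 2 ≤ N) : qpar N + (qpar N)⁻¹ = N := by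
  have h : (2:ℝ) ≤ N := by exact_mod_cast hN
  have h0 := Real.sqrt_nonneg ((N : ℝ) ^ 2 - 4)
  have h1 : Real.sqrt ((N : ℝ) ^ 2 - 4) ^ 2 = (N : ℝ) ^ 2 - 4 := Real.sq_sqrt (by nlinarith)
  unfold qpar
  generalize Real.sqrt ((N : ℝ) ^ 2 - 4) = s at *
  have : (N:ℝ) + s ≠ 0 := by positivity
  field_simp
  nlinarith

theorem qint_succ {N : ℕ} (hN : 2 ≤ N) (n : ℕ) :
    qint N (n + 1) = qpar N * qint N n + (qpar N ^ n)⁻¹ := by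
  have hq := (qpar_pos hN).ne'
  unfold qint
  rw [Finset.sum_range_succ, Finset.mul_sum]
  congr 1
  · refine Finset.sum_congr rfl fun j _ => ?_
    rw [← zpow_one_add₀ hq]
    congr 1; push_cast; ring
  · rw [← zpow_natCast, ← zpow_neg]
    congr 1; push_cast; ring

theorem qint_rec {N : ℕ} (hN : 2 ≤ N) (n : ℕ) :
    qint N (n + 2) = N * qint N (n + 1) - qint N n := by
  have hq := (qpar_pos hN).ne'
  rw [qint_succ hN (n + 1), ← qpar_add hN]
  have h := qint_succ hN n
  have : (qpar N)⁻¹ * qint N (n + 1) = qint N n + (qpar N ^ (n + 1))⁻¹ := by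
    rw [h]; field_simp; ring
  linear_combination -this

theorem qint_zero' (N : ℕ) : qint N 0 = 0 := by simp [qint]

theorem qint_one' (N : ℕ) : qint N 1 = 1 := by simp [qint]

theorem qint_nonneg' {N : ℕ} (hN : 2 ≤ N) (n : ℕ) : 0 ≤ qint N n :=
  Finset.sum_nonneg fun _ _ => (zpow_pos (qpar_pos hN) _).le

theorem qint_pos' {N : ℕ} (hN : 2 ≤ N) (n : ℕ) : 0 < qint N (n + 1) :=
  Finset.sum_pos (fun _ _ => zpow_pos (qpar_pos hN) _) (by simp)

theorem qint_id1 {N : ℕ} (hN : 2 ≤ N) (b s : ℕ) :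
    qint N (s + 1) * qint N (b + s) = qint N s * qint N (b + s + 1) + qint N b := by
  induction s with
  | zero => simp [qint_zero', qint_one']
  | succ s ih =>
    have h1 := qint_rec hN s
    have h2 := qint_rec hN (b + s)
    rw [show b + (s + 1) = b + s + 1 by ring, show s + 1 + 1 = s + 2 by ring,
      show b + s + 1 + 1 = b + s + 2 by ring, h1, h2]
    linear_combination ih

theorem qint_id {N : ℕ} (hN : 2 ≤ N) (b s a : ℕ) :
    qint N (a + s) * qint N (b + s) = qint N s * qint N (a + b + s) + qint N a * qint N b ∧
    qint N (a + s + 1) * qint N (b + s)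
      = qint N s * qint N (a + b + s + 1) + qint N (a + 1) * qint N b := by
  induction a with
  | zero => simpa [qint_zero', qint_one'] using qint_id1 hN b s
  | succ a ih =>
    obtain ⟨i1, i2⟩ := ih
    have h1 := qint_rec hN (a + s)
    have h2 := qint_rec hN (a + b + s)
    have h3 := qint_rec hN a
    rw [show a + 1 + s = a + s + 1 by ring, show a + 1 + b + s = a + b + s + 1 by ring]
    refine ⟨i2, ?_⟩
    rw [show a + s + 1 + 1 = a + s + 2 by ring, show a + b + s + 1 + 1 = a + b + s + 2 by ring,
      show a + 1 + 1 = a + 2 by ring, h1, h2, h3]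
    linear_combination (N : ℝ) * i2 - i1

theorem qint_key {N : ℕ} (hN : 2 ≤ N) (a b r : ℕ) :
    qint N (r + 1) * qint N (a + b + r + 2)
      ≤ N * (qint N (a + r + 1) * qint N (b + r + 1)) := by
  have h := (qint_id hN b (r + 1) a).1
  simp only [← add_assoc] at h
  rw [h, qint_rec hN (a + b + r)]
  have p1 := mul_nonneg (qint_nonneg' hN (r + 1)) (qint_nonneg' hN (a + b + r))
  have p2 := mul_nonneg (Nat.cast_nonneg (α := ℝ) N)
    (mul_nonneg (qint_nonneg' hN a) (qint_nonneg' hN b))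
  nlinarith

theorem qfact_pos' {N : ℕ} (hN : 2 ≤ N) (n : ℕ) : 0 < qfact N n :=
  Finset.prod_pos fun i _ => qint_pos' hN i

theorem qfact_succ' (N n : ℕ) : qfact N (n + 1) = qfact N n * qint N (n + 1) :=
  Finset.prod_range_succ _ _

theorem qfact_le {N : ℕ} (hN : 2 ≤ N) (a b r : ℕ) :
    qfact N r * qfact N a * qfact N b * qfact N (a + b + r + 1)
      ≤ qint N (a + b + 1) * (N : ℝ) ^ r * (qfact N (a + r) * qfact N (b + r) * qfact N (a + b)) := by
  induction r with
  | zero =>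
    apply le_of_eq
    simp only [add_zero, qfact_succ', pow_zero]
    simp [qfact]
    ring
  | succ r ih =>
    have h := qint_key hN a b r
    have e1 := qfact_succ' N r
    have e2 := qfact_succ' N (a + b + r + 1)
    have e3 := qfact_succ' N (a + r)
    have e4 := qfact_succ' N (b + r)
    simp only [← add_assoc]
    rw [e1, e2, e3, e4]
    have := mul_le_mul ih h (mul_nonneg (qint_nonneg' hN _) (qint_nonneg' hN _)) (by
      have := qfact_pos' hN (a + r)
      have := qfact_pos' hN (b + r)
      have := qfact_pos' hN (a + b)
      have := qint_pos' hN (a + b)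
      positivity)
    rw [show a + b + r + 1 + 1 = a + b + r + 2 by ring]
    refine le_trans (le_of_eq ?_) (this.trans (le_of_eq ?_)) <;> ring

/-- For an admissible triple `(l,m,k)` with `r = (l+m−k)/2` and every integer `N ≥ 2`,
one has `0 < θ_q(k,l,m) ≤ [k+1]_q · N^r`. -/
theorem thetaNet_pos_and_le (k l m r N : ℕ)
    (hadm : l + m = k + 2 * r) (hrl : r ≤ l) (hrm : r ≤ m) (hN : 2 ≤ N) :
    0 < thetaNet N k l m r ∧ thetaNet N k l m r ≤ qint N (k + 1) * (N : ℝ) ^ r := by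
  obtain ⟨a, rfl⟩ := Nat.exists_eq_add_of_le' hrl
  obtain ⟨b, rfl⟩ := Nat.exists_eq_add_of_le' hrm
  obtain rfl : k = a + b := by omega
  have hp := qfact_pos' hN
  unfold thetaNet
  have hd : 0 < qfact N (a + r) * qfact N (b + r) * qfact N (a + b) :=
    mul_pos (mul_pos (hp _) (hp _)) (hp _)
  refine ⟨div_pos (mul_pos (mul_pos (mul_pos (hp _) (hp _)) (hp _)) (hp _)) hd, ?_⟩
  rw [div_le_iff₀ hd, Nat.add_sub_cancel, Nat.add_sub_cancel]
  exact qfact_le hN a b r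
end

section
/- Let H and K be complex inner product spaces with H nontrivial, let γ : H → K be a linear isometry, let P be an orthogonal projection on K, and suppose there is a constant t with 0 < t ≤ 1 such that ‖P(γξ)‖ = t·‖ξ‖ for every ξ ∈ H. Then α := t⁻¹·P∘γ is a linear isometry from H to K, and the operator norm of α − γ is at most (t⁻¹ − 1) + √(1 − t²). -/
/-- Let `H` and `K` be complex inner product spaces with `H` nontrivial, `γ : H → K` a linear
isometry, `P` an orthogonal projection on `K` (a continuous linear idempotent self-adjoint map),
and suppose `‖P(γξ)‖ = t·‖ξ‖` for every `ξ ∈ H` with a constant `0 < t ≤ 1`.  Then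
`α := t⁻¹·P∘γ` is a linear isometry from `H` to `K`, and `‖α − γ‖ ≤ (t⁻¹ − 1) + √(1 − t²)`. -/
theorem rescaled_proj_comp_isometry_and_close
    {H K : Type*} [NormedAddCommGroup H] [InnerProductSpace ℂ H] [Nontrivial H]
    [NormedAddCommGroup K] [InnerProductSpace ℂ K]
    (γ : H →ₗᵢ[ℂ] K) (P : K →L[ℂ] K)
    (hP2 : P.comp P = P)
    (hPsa : ∀ x y : K, (inner ℂ (P x) y : ℂ) = inner ℂ x (P y))
    (t : ℝ) (ht0 : 0 < t) (ht1 : t ≤ 1)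
    (hnorm : ∀ ξ : H, ‖P (γ ξ)‖ = t * ‖ξ‖) :
    (∀ ξ : H, ‖(t⁻¹ • (P.comp γ.toContinuousLinearMap)) ξ‖ = ‖ξ‖) ∧
      ‖t⁻¹ • (P.comp γ.toContinuousLinearMap) - γ.toContinuousLinearMap‖ ≤
        (t⁻¹ - 1) + Real.sqrt (1 - t ^ 2) := by
  have htn : t ≠ 0 := ht0.ne'
  have hti : 1 ≤ t⁻¹ := (one_le_inv₀ ht0).2 ht1
  refine ⟨fun ξ => ?_, ?_⟩
  · have h1 : (t⁻¹ • (P.comp γ.toContinuousLinearMap)) ξ = t⁻¹ • P (γ ξ) := rfl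
    rw [h1, norm_smul, hnorm, Real.norm_of_nonneg (by positivity), inv_mul_cancel_left₀ htn]
  · refine ContinuousLinearMap.opNorm_le_bound _
      (add_nonneg (by linarith) (Real.sqrt_nonneg _)) fun ξ => ?_
    have h1 : (t⁻¹ • (P.comp γ.toContinuousLinearMap) - γ.toContinuousLinearMap) ξ
        = (t⁻¹ - 1) • P (γ ξ) + (P (γ ξ) - γ ξ) := by
      have h2 : (t⁻¹ • (P.comp γ.toContinuousLinearMap) - γ.toContinuousLinearMap) ξ
        = t⁻¹ • P (γ ξ) - γ ξ := rfl
      rw [h2, sub_smul, one_smul]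
      abel
    have hPP : P (P (γ ξ)) = P (γ ξ) := congrArg (fun T : K →L[ℂ] K => T (γ ξ)) hP2
    have hin : (inner ℂ (P (γ ξ)) (γ ξ) : ℂ) = inner ℂ (P (γ ξ)) (P (γ ξ)) := by
      rw [← hPsa, hPP]
    have hsq : ‖P (γ ξ) - γ ξ‖ ^ 2 = (1 - t ^ 2) * ‖ξ‖ ^ 2 := by
      rw [norm_sub_sq (𝕜 := ℂ), hin, inner_self_eq_norm_sq, hnorm, γ.norm_map]
      ring
    have hd : ‖P (γ ξ) - γ ξ‖ = Real.sqrt (1 - t ^ 2) * ‖ξ‖ := by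
      rw [← Real.sqrt_sq (norm_nonneg (P (γ ξ) - γ ξ)), hsq,
        Real.sqrt_mul (by nlinarith), Real.sqrt_sq (norm_nonneg _)]
    rw [h1]
    refine (norm_add_le _ _).trans ?_
    rw [hd, norm_smul, hnorm, Real.norm_of_nonneg (by linarith), add_mul]
    have h3 : t * ‖ξ‖ ≤ ‖ξ‖ := mul_le_of_le_one_left (norm_nonneg _) ht1
    have h4 := mul_le_mul_of_nonneg_left h3 (sub_nonneg.2 hti)
    linarith
end

section
/- Let H_A and H_B be nontrivial finite-dimensional complex Hilbert spaces with orthonormal structure, let D ≥ 1 be an integer with standard orthonormal basis e₁,…,e_D of ℂ^D, and define V : H_A ⊗ H_B → (H_A ⊗ ℂ^D) ⊗ (ℂ^D ⊗ H_B) by V(ξ ⊗ η) = D^{−1/2} Σ_{i=1}^{D} (ξ ⊗ e_i) ⊗ (e_i ⊗ η), extended linearly. Then V is a linear isometry, and for every linear operator ρ on H_A ⊗ H_B one has (id_{H_A⊗ℂ^D} ⊗ Tr_{ℂ^D⊗H_B})(V ρ V*) = ((id_{H_A} ⊗ Tr_{H_B})(ρ)) ⊗ (1/D)·Id_{ℂ^D},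 where the partial traces are the maps obtained by applying the operator trace on the indicated tensor factor. -/
open scoped BigOperators Kronecker
open Matrix

/-- Elementary tensor of two vectors, in the identification
`ℂ^ι ⊗ ℂ^κ ≅ ℂ^(ι × κ)`. -/
def tensVec {ι κ : Type*} (x : ι → ℂ) (y : κ → ℂ) : ι × κ → ℂ := fun p => x p.1 * y p.2

/-- The standard basis vector `e_s` of `ℂ^ι`. -/
def stdVec {ι : Type*} [DecidableEq ι] (s : ι) : ι → ℂ := fun i => if i = s then 1 else 0

/-- The partial trace over the second tensor factor:
`(id ⊗ Tr)(ρ) i j = ∑ s, ρ (i,s) (j,s)`. -/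
noncomputable def ptraceRight {α β : Type*} [Fintype β] (ρ : Matrix (α × β) (α × β) ℂ) : Matrix α α ℂ :=
  fun i j => ∑ s, ρ (i, s) (j, s)

/-- The partial trace over the first tensor factor:
`(Tr ⊗ id)(ρ) i j = ∑ s, ρ (s,i) (s,j)`. -/
noncomputable def ptraceLeft {α β : Type*} [Fintype α] (ρ : Matrix (α × β) (α × β) ℂ) : Matrix β β ℂ :=
  fun i j => ∑ s, ρ (s, i) (s, j)

/-- The matrix of the map `V : H_A ⊗ H_B → (H_A ⊗ ℂ^D) ⊗ (ℂ^D ⊗ H_B)` determined by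
`V(ξ ⊗ η) = D^{−1/2} ∑_{s=1}^{D} (ξ ⊗ e_s) ⊗ (e_s ⊗ η)`, with `H_A = ℂ^a`, `H_B = ℂ^b`. -/
noncomputable def Vmat (a b D : ℕ) :
    Matrix ((Fin a × Fin D) × (Fin D × Fin b)) (Fin a × Fin b) ℂ :=
  fun p q =>
    if p.1.1 = q.1 ∧ p.2.2 = q.2 ∧ p.1.2 = p.2.1 then ((Real.sqrt D)⁻¹ : ℝ) else 0

theorem Vmat_mulVec_apply (a b D : ℕ) (x : Fin a × Fin b → ℂ)
    (p : (Fin a × Fin D) × (Fin D × Fin b)) :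
    (Vmat a b D).mulVec x p =
      if p.1.2 = p.2.1 then ((Real.sqrt D)⁻¹ : ℂ) * x (p.1.1, p.2.2) else 0 := by
  obtain ⟨⟨i, s⟩, ⟨t, j⟩⟩ := p
  simp only [Matrix.mulVec, dotProduct, Vmat]
  rw [Finset.sum_eq_single (i, j)]
  · by_cases h : s = t <;> simp [h]
  · rintro ⟨i', j'⟩ _ hne
    rw [if_neg, zero_mul]
    rintro ⟨h1, h2, -⟩
    simp only at h1 h2
    exact hne (by rw [h1, h2])
  · simp

theorem Vmat_sqrt_sq (D : ℕ) :
    ((Real.sqrt D)⁻¹ : ℂ) * ((Real.sqrt D)⁻¹ : ℂ) = (D : ℂ)⁻¹ := by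
  rw [← mul_inv, ← Complex.ofReal_mul, Real.mul_self_sqrt (Nat.cast_nonneg D)]
  simp

theorem Vmat_conj_apply (a b D : ℕ) (ρ : Matrix (Fin a × Fin b) (Fin a × Fin b) ℂ)
    (p q : (Fin a × Fin D) × (Fin D × Fin b)) :
    (Vmat a b D * ρ * (Vmat a b D)ᴴ) p q =
      if p.1.2 = p.2.1 ∧ q.1.2 = q.2.1 then
        (D : ℂ)⁻¹ * ρ (p.1.1, p.2.2) (q.1.1, q.2.2) else 0 := by
  have h1 : ∀ r, (Vmat a b D * ρ) p r =
      if p.1.2 = p.2.1 then ((Real.sqrt D)⁻¹ : ℂ) * ρ (p.1.1, p.2.2) r else 0 := fun r =>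
    Vmat_mulVec_apply a b D (fun k => ρ k r) p
  have h2 : (Vmat a b D * ρ * (Vmat a b D)ᴴ) p q =
      (Vmat a b D).mulVec (fun r => (Vmat a b D * ρ) p r) q := by
    rw [Matrix.mul_apply]
    simp only [Matrix.mulVec, dotProduct]
    refine Finset.sum_congr rfl fun r _ => ?_
    rw [mul_comm, Matrix.conjTranspose_apply]
    congr 1
    simp only [Vmat]
    split_ifs <;> simp
  rw [h2, Vmat_mulVec_apply, h1, ← Vmat_sqrt_sq]
  by_cases hp : p.1.2 = p.2.1 <;> by_cases hq : q.1.2 = q.2.1 <;> simp [hp, hq, mul_assoc]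

/-- `V(ξ ⊗ η) = D^{−1/2} ∑_s (ξ ⊗ e_s) ⊗ (e_s ⊗ η)`; `V` is a linear isometry; and
`(id_{H_A⊗ℂ^D} ⊗ Tr_{ℂ^D⊗H_B})(V ρ V*) = ((id_{H_A} ⊗ Tr_{H_B})(ρ)) ⊗ (1/D)·Id_{ℂ^D}`
for every operator `ρ` on `H_A ⊗ H_B`. -/
theorem Vmat_isometry_and_partialTrace (a b D : ℕ) (ha : 0 < a) (hb : 0 < b) (hD : 1 ≤ D) :
    (∀ (ξ : Fin a → ℂ) (η : Fin b → ℂ),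
        (Vmat a b D).mulVec (tensVec ξ η) =
          ((Real.sqrt D)⁻¹ : ℂ) •
            ∑ s : Fin D, tensVec (tensVec ξ (stdVec s)) (tensVec (stdVec s) η)) ∧
    (∀ ξ : EuclideanSpace ℂ (Fin a × Fin b),
        ‖Matrix.toEuclideanLin (Vmat a b D) ξ‖ = ‖ξ‖) ∧
    (∀ ρ : Matrix (Fin a × Fin b) (Fin a × Fin b) ℂ,
        ptraceRight (Vmat a b D * ρ * (Vmat a b D)ᴴ) =
          ptraceRight ρ ⊗ₖ (((D : ℂ)⁻¹) • (1 : Matrix (Fin D) (Fin D) ℂ))) := by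
  refine ⟨?_, ?_, ?_⟩
  · intro ξ η
    ext ⟨⟨i, s⟩, ⟨t, j⟩⟩
    rw [Vmat_mulVec_apply]
    simp only [Pi.smul_apply, Finset.sum_apply, tensVec, stdVec, smul_eq_mul]
    rw [Finset.sum_eq_single s]
    · by_cases h : s = t
      · simp [h]
      · simp [h, Ne.symm h]
    · intro u _ hu
      simp [Ne.symm hu]
    · simp
  · intro ξ
    have hD' : (D : ℝ) ≠ 0 := by
      have : D ≠ 0 := by omega
      exact_mod_cast this
    rw [EuclideanSpace.norm_eq, EuclideanSpace.norm_eq]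
    congr 1
    have key : ∀ p, ‖(Matrix.toEuclideanLin (Vmat a b D) ξ) p‖ ^ 2 =
        if p.1.2 = p.2.1 then (D : ℝ)⁻¹ * ‖ξ (p.1.1, p.2.2)‖ ^ 2 else 0 := by
      intro p
      have : (Matrix.toEuclideanLin (Vmat a b D) ξ) p = (Vmat a b D).mulVec (fun k => ξ k) p := rfl
      rw [this, Vmat_mulVec_apply]
      split_ifs
      · rw [norm_mul, mul_pow, norm_inv, Complex.norm_real, inv_pow, Real.norm_eq_abs, sq_abs,
          Real.sq_sqrt (Nat.cast_nonneg D)]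
      · simp
    simp only [key, Fintype.sum_prod_type]
    refine Finset.sum_congr rfl fun i _ => ?_
    have : ∀ s : Fin D, (∑ t : Fin D, ∑ j : Fin b,
        if s = t then (D : ℝ)⁻¹ * ‖ξ (i, j)‖ ^ 2 else 0) =
        (D : ℝ)⁻¹ * ∑ j : Fin b, ‖ξ (i, j)‖ ^ 2 := by
      intro s
      rw [Finset.sum_comm, Finset.mul_sum]
      simp
    simp only [this, Finset.sum_const, Finset.card_univ, Fintype.card_fin, nsmul_eq_mul]
    rw [← mul_assoc, mul_inv_cancel₀ hD', one_mul]
  · intro ρ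
    ext ⟨i, s⟩ ⟨i', s'⟩
    simp only [ptraceRight, Vmat_conj_apply, Matrix.kroneckerMap_apply, Matrix.smul_apply,
      smul_eq_mul, Fintype.sum_prod_type]
    rw [Finset.sum_comm, Finset.sum_mul]
    refine Finset.sum_congr rfl fun j _ => ?_
    rw [Finset.sum_eq_single s]
    · by_cases h : s' = s
      · subst h
        simp [mul_comm]
      · simp [h, Ne.symm h]
    · intro u _ hu
      simp [Ne.symm hu]
    · simp
end

section
/- Let H_A and H_B be nontrivial finite-dimensional complex Hilbert spaces, let D ≥ 1 be an integer with standard orthonormal basis e₁,…,e_D of ℂ^D, and define V : H_A ⊗ H_B → (H_A ⊗ ℂ^D) ⊗ (ℂ^D ⊗ H_B) by V(ξ ⊗ η) = D^{−1/2} Σ_{i=1}^{D} (ξ ⊗ e_i) ⊗ (e_i ⊗ η), extended linearly. Then for every linear operator ρ on H_A ⊗ H_B one has (Tr_{H_A⊗ℂ^D} ⊗ id_{ℂ^D⊗H_B})(V ρ V*) = (1/D)·Id_{ℂ^D} ⊗ ((Tr_{H_A} ⊗ id_{H_B})(ρ)), where the partial traces are the maps obtained by applying the operator trace on the indicated tensor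 factor. -/
open scoped BigOperators Kronecker
open Matrix

theorem Vmat_apply_eq (a b D : ℕ) (p : (Fin a × Fin D) × (Fin D × Fin b)) (q : Fin a × Fin b) :
    Vmat a b D p q =
      if q = (p.1.1, p.2.2) then (if p.1.2 = p.2.1 then ((Real.sqrt D : ℂ))⁻¹ else 0) else 0 := by
  obtain ⟨⟨x, s⟩, ⟨t, y⟩⟩ := p
  obtain ⟨u, v⟩ := q
  simp only [Vmat, Prod.mk.injEq]
  by_cases h1 : x = u <;> by_cases h2 : y = v <;> by_cases h3 : s = t <;>
    simp [h1, h2, h3, eq_comm]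

/-- With `V(ξ ⊗ η) = D^{−1/2} ∑_s (ξ ⊗ e_s) ⊗ (e_s ⊗ η)`, one has
`(Tr_{H_A⊗ℂ^D} ⊗ id_{ℂ^D⊗H_B})(V ρ V*) = (1/D)·Id_{ℂ^D} ⊗ ((Tr_{H_A} ⊗ id_{H_B})(ρ))`
for every operator `ρ` on `H_A ⊗ H_B`. -/
theorem Vmat_partialTrace_left (a b D : ℕ) (ha : 0 < a) (hb : 0 < b) (hD : 1 ≤ D) :
    (∀ (ξ : Fin a → ℂ) (η : Fin b → ℂ),
        (Vmat a b D).mulVec (tensVec ξ η) =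
          ((Real.sqrt D)⁻¹ : ℂ) •
            ∑ s : Fin D, tensVec (tensVec ξ (stdVec s)) (tensVec (stdVec s) η)) ∧
    (∀ ρ : Matrix (Fin a × Fin b) (Fin a × Fin b) ℂ,
        ptraceLeft (Vmat a b D * ρ * (Vmat a b D)ᴴ) =
          (((D : ℂ)⁻¹) • (1 : Matrix (Fin D) (Fin D) ℂ)) ⊗ₖ ptraceLeft ρ) := by
  have hc : ((Real.sqrt D : ℂ))⁻¹ * ((Real.sqrt D : ℂ))⁻¹ = (D : ℂ)⁻¹ := by
    rw [← mul_inv, ← Complex.ofReal_mul, Real.mul_self_sqrt (Nat.cast_nonneg D)]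
    simp
  constructor
  · intro ξ η
    ext ⟨⟨x, s⟩, ⟨t, y⟩⟩
    simp only [Matrix.mulVec, dotProduct, Vmat_apply_eq, ite_mul, zero_mul,
      Finset.sum_ite_eq', Finset.mem_univ, if_true, Pi.smul_apply, Finset.sum_apply, smul_eq_mul,
      tensVec, stdVec]
    by_cases h : s = t
    · subst h
      simp
    · simp [h, Ne.symm h]
  · intro ρ
    ext ⟨t, y⟩ ⟨t', y'⟩
    simp only [ptraceLeft, Matrix.mul_apply, Matrix.conjTranspose_apply, Vmat_apply_eq, ite_mul,
      zero_mul, Finset.sum_ite_eq', Finset.mem_univ, if_true, apply_ite (star : ℂ → ℂ), star_zero,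
      mul_ite, mul_zero, Matrix.kroneckerMap_apply, Matrix.smul_apply, Matrix.one_apply,
      smul_eq_mul, Fintype.sum_prod_type]
    by_cases h : t = t'
    · subst h
      simp [Finset.mul_sum, ← hc]
      refine Finset.sum_congr rfl fun x _ => ?_
      ring
    · simp [h]
      exact fun h' => absurd h'.symm h
end
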